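/- Let θ* ∈ ℝ^d be a stationary point of L (∇L(θ*) = 0), assume ∇L is differentiable at θ* with Hessian H = ∇²L(θ*) that is symmetric and invertible, and let f, g : ℝ^d → ℝ be continuously differentiable near θ*. Let θ̂_f and θ̂_g be prediction-regularized MAP paths for the regularizers f and g respectively, both differentiable at 0 with θ̂_f(0) = θ̂_g(0) = θ*. Then the two cross-regularization derivatives agree: d/dλ g(θ̂_f(λ)) at λ = 0 equals d/dλ f(θ̂_g(λ)) at λ = 0, and both equal ⟨∇g(θ*), P⁻¹ ∇f(θ*)⟩ with P = −H. In particular the RegVar covariance is symmetric in f and g. -/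

import Mathlib

open scoped RealInnerProductSpace Topology

lemma regvar_path_deriv {d : ℕ} {L f : EuclideanSpace ℝ (Fin d) → ℝ}
    {θstar : EuclideanSpace ℝ (Fin d)}
    {θf : ℝ → EuclideanSpace ℝ (Fin d)}
    {H : EuclideanSpace ℝ (Fin d) ≃L[ℝ] EuclideanSpace ℝ (Fin d)}
    (hL : HasFDerivAt (gradient L)
      (H : EuclideanSpace ℝ (Fin d) →L[ℝ] EuclideanSpace ℝ (Fin d)) θstar)
    (hf : ContDiffAt ℝ 1 f θstar)
    (hθf0 : θf 0 = θstar)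
    (hθf : DifferentiableAt ℝ θf 0)
    (hstatf : ∀ᶠ l in 𝓝 (0 : ℝ),
      gradient L (θf l) + l • gradient f (θf l) = 0) :
    HasDerivAt θf (-H.symm (gradient f θstar)) 0 := by
  subst hθf0
  have hcf : ContinuousAt (gradient f) (θf 0) := by
    have h0 : ContinuousAt (fderiv ℝ f) (θf 0) :=
      (hf.fderiv_right (m := 0) (by norm_num)).continuousAt
    exact (InnerProductSpace.toDual ℝ
      (EuclideanSpace ℝ (Fin d))).symm.continuous.continuousAt.comp h0
  have hc : ContinuousAt (fun l => gradient f (θf l)) 0 :=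
    ContinuousAt.comp (f := θf) hcf hθf.continuousAt
  have h1 : HasDerivAt (fun l : ℝ => l • gradient f (θf l)) (gradient f (θf 0)) 0 := by
    rw [hasDerivAt_iff_tendsto_slope]
    refine (hc.tendsto.mono_left nhdsWithin_le_nhds).congr' ?_
    filter_upwards [self_mem_nhdsWithin] with l hl
    have hl' : l ≠ 0 := hl
    simp [slope, smul_smul, hl']
  have h2 : HasDerivAt (fun l => gradient L (θf l)) (H (deriv θf 0)) 0 :=
    HasFDerivAt.comp_hasDerivAt (f := θf) 0 hL hθf.hasDerivAt
  have h3 := (h2.add h1).unique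
    ((hasDerivAt_const (0 : ℝ) (0 : EuclideanSpace ℝ (Fin d))).congr_of_eventuallyEq hstatf)
  have h4 : deriv θf 0 = -H.symm (gradient f (θf 0)) := by
    apply H.injective
    rw [map_neg, H.apply_symm_apply]
    exact eq_neg_of_add_eq_zero_left h3
  rw [← h4]
  exact hθf.hasDerivAt

lemma regvar_comp_deriv {d : ℕ} {g : EuclideanSpace ℝ (Fin d) → ℝ}
    {θstar v : EuclideanSpace ℝ (Fin d)} {θ : ℝ → EuclideanSpace ℝ (Fin d)}
    (hg : ContDiffAt ℝ 1 g θstar) (h0 : θ 0 = θstar) (hθ : HasDerivAt θ v 0) :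
    deriv (fun l => g (θ l)) 0 = ⟪gradient g θstar, v⟫ := by
  subst h0
  have h := (hg.differentiableAt (by norm_num)).hasGradientAt.hasFDerivAt
  have := (HasFDerivAt.comp_hasDerivAt (f := θ) 0 h hθ).deriv
  simpa [Function.comp_def] using this

/-- Symmetry of the RegVar covariance. With a symmetric
invertible Hessian `H = ∇²L(θ*)` at a stationary point `θ*` of `L`, the two
cross-regularization derivatives agree:
`d/dλ g(θ̂_f(λ))|₀ = d/dλ f(θ̂_g(λ))|₀ = ⟨∇g(θ*), P⁻¹ ∇f(θ*)⟩` with `P = −H`. -/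
theorem regvar_cov_symmetric
    (d : ℕ) (L f g : EuclideanSpace ℝ (Fin d) → ℝ)
    (θstar : EuclideanSpace ℝ (Fin d))
    (θf θg : ℝ → EuclideanSpace ℝ (Fin d))
    (H : EuclideanSpace ℝ (Fin d) ≃L[ℝ] EuclideanSpace ℝ (Fin d))
    (hstatL : gradient L θstar = 0)
    (hL : HasFDerivAt (gradient L)
      (H : EuclideanSpace ℝ (Fin d) →L[ℝ] EuclideanSpace ℝ (Fin d)) θstar)
    (hsym : ∀ u v : EuclideanSpace ℝ (Fin d), ⟪H u, v⟫ = ⟪u, H v⟫)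
    (hf : ContDiffAt ℝ 1 f θstar)
    (hg : ContDiffAt ℝ 1 g θstar)
    (hθf0 : θf 0 = θstar) (hθg0 : θg 0 = θstar)
    (hθf : DifferentiableAt ℝ θf 0) (hθg : DifferentiableAt ℝ θg 0)
    (hstatf : ∀ᶠ l in 𝓝 (0 : ℝ),
      gradient L (θf l) + l • gradient f (θf l) = 0)
    (hstatg : ∀ᶠ l in 𝓝 (0 : ℝ),
      gradient L (θg l) + l • gradient g (θg l) = 0) :
    deriv (fun l => g (θf l)) 0 = deriv (fun l => f (θg l)) 0 ∧
    deriv (fun l => g (θf l)) 0 = -⟪gradient g θstar, H.symm (gradient f θstar)⟫ := by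
  have e1 := regvar_comp_deriv hg hθf0 (regvar_path_deriv hL hf hθf0 hθf hstatf)
  have e2 := regvar_comp_deriv hf hθg0 (regvar_path_deriv hL hg hθg0 hθg hstatg)
  rw [inner_neg_right] at e1 e2
  refine ⟨?_, e1⟩
  rw [e1, e2]
  have h := hsym (H.symm (gradient g θstar)) (H.symm (gradient f θstar))
  rw [H.apply_symm_apply, H.apply_symm_apply] at h
  rw [h, real_inner_comm]
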